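/- arXiv:math/0504581 — 2 statements merged into one kernel-verified Lean document; each statement's English description precedes it below -/
import Mathlib

section
/- Let K = F_2(x)(y) where y satisfies y^2 + x·y + x(x^2 + x + 1) = 0 (this quadratic polynomial in y is irreducible over F_2(x)). Then the ideal class group Cl(O_K), where O_K is the integral closure of F_2[x] in K, is cyclic of order 2. -/
open Polynomial

/-!
Write `q = x ^ 2 + x + 1`, so that `y ^ 2 + x y + x q = 0`, and let `N(a + b y)` be the norm
`a ^ 2 + a b x + b ^ 2 x q`.

*The ring of integers is `𝔽₂[x] ⊕ 𝔽₂[x] y`.* For an integral element `a + b y` the trace `b x` and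
the norm are polynomials, hence so is `x a`. Comparing divisibility by `x` in the norm equation
shows that `a` and `b` are already polynomials (`X_dvd_of_norm`).

*There are at most two ideal classes.* By a Hermite normal form argument, every nonzero ideal is a
multiple of an ideal `(u, v + y)` with `u ∣ N(v + y)` (`IsModel.exists_stdIdeal`). Here `v` may be
reduced modulo `u`, and multiplication by the conjugate of `v + y` exchanges `u` for the cofactor
`N(v + y) / u` (`IsModel.stdIdeal_swap`). As `N(v + y)` has degree at most `max (2 deg u - 2, 3)`,
this lowers the degree of `u` as long as `deg u ≥ 2`. What remains is the unit ideal and the ideals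
with `u` linear, which correspond to the affine rational points of the curve: only `(x, y)`
(`linear_case`).

*The ideal `(x, y)` is not principal.* The leading terms of `a ^ 2` and `b ^ 2 x q` have degrees of
different parity, so they cannot cancel, and `N(a + b y)` has degree at least `3` once `b ≠ 0`
(`three_le_natDegree_nm`). A generator of `(x, y)` divides `x`, so its norm divides `x ^ 2`; hence it
is a polynomial in `x`. Since it also divides `y`, it is a unit, although `(x, y)` is a proper ideal.
-/

/-! ### The norm form -/

/-- The norm `a ^ 2 + a b x + b ^ 2 (x ^ 3 + x ^ 2 + x)` of `a + b y`, as a form in `a` and `b`. -/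
noncomputable def nm (a b : (ZMod 2)[X]) : (ZMod 2)[X] :=
  a ^ 2 + a * b * X + b ^ 2 * (X ^ 3 + X ^ 2 + X)

lemma two_zero : (2 : (ZMod 2)[X]) = 0 := by
  have := CharP.cast_eq_zero ((ZMod 2)[X]) 2
  exact_mod_cast this

lemma natDegree_cubic : (X ^ 3 + X ^ 2 + X : (ZMod 2)[X]).natDegree = 3 := by
  compute_degree!

/-- The degrees of `a ^ 2` and `b ^ 2 (x ^ 3 + x ^ 2 + x)` differ, having different parity, and the
mixed term has degree below the larger of the two. -/
lemma three_le_natDegree_nm (a b : (ZMod 2)[X]) (hb : b ≠ 0) : 3 ≤ (nm a b).natDegree := by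
  have hc : (X ^ 3 + X ^ 2 + X : (ZMod 2)[X]) ≠ 0 := by
    intro h; have := natDegree_cubic; rw [h] at this; simp at this
  have h1 : (a ^ 2).natDegree = 2 * a.natDegree := natDegree_pow _ _
  have h3 : (b ^ 2 * (X ^ 3 + X ^ 2 + X)).natDegree = 2 * b.natDegree + 3 := by
    rw [natDegree_mul (pow_ne_zero _ hb) hc, natDegree_pow, natDegree_cubic]
  have h2 : (a * b * X).natDegree ≤ a.natDegree + b.natDegree + 1 := by
    refine natDegree_mul_le.trans ?_
    have := natDegree_mul_le (p := a) (q := b)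
    simp only [natDegree_X]
    omega
  unfold nm
  by_cases h : b.natDegree + 2 ≤ a.natDegree
  · have h4 : (a ^ 2 + a * b * X).natDegree = 2 * a.natDegree := by
      rw [natDegree_add_eq_left_of_natDegree_lt, h1]; omega
    rw [natDegree_add_eq_left_of_natDegree_lt] <;> omega
  · have h4 : (a ^ 2 + a * b * X).natDegree ≤ 2 * b.natDegree + 2 :=
      (natDegree_add_le _ _).trans (by simp only [max_le_iff]; omega)
    rw [natDegree_add_eq_right_of_natDegree_lt] <;> omega

lemma natDegree_nm_one_lt (u v : (ZMod 2)[X]) (hu : 2 ≤ u.natDegree)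
    (hv : v.natDegree < u.natDegree) : (nm v 1).natDegree < 2 * u.natDegree := by
  have h1 : (v ^ 2).natDegree = 2 * v.natDegree := natDegree_pow _ _
  have h2 : (v * X).natDegree ≤ v.natDegree + 1 := by
    refine natDegree_mul_le.trans ?_
    simp
  unfold nm
  rw [mul_one, one_pow, one_mul]
  refine (natDegree_add_le _ _).trans_lt ?_
  have := natDegree_add_le (v ^ 2) (v * X)
  rw [natDegree_cubic]
  simp only [max_lt_iff]
  simp only [le_max_iff] at this
  omega

lemma nm_eq_zero {a b : (ZMod 2)[X]} (h : nm a b = 0) : a = 0 ∧ b = 0 := by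
  have hb : b = 0 := by
    by_contra hb
    have := three_le_natDegree_nm a b hb
    rw [h] at this
    simp at this
  subst hb
  simpa [nm] using h

/-- Multiplicativity of the norm form. -/
lemma nm_mul (a b c d : (ZMod 2)[X]) :
    nm (a * c + b * d * (X ^ 3 + X ^ 2 + X)) (a * d + b * c + b * d * X) = nm a b * nm c d := by
  unfold nm
  ring_nf
  reduce_mod_char
  try ring

lemma dvd_nm_add_mul {u v : (ZMod 2)[X]} (k : (ZMod 2)[X]) (h : u ∣ nm v 1) :
    u ∣ nm (v + u * k) 1 := by
  have : nm (v + u * k) 1 = nm v 1 + u * (2 * v * k + u * k ^ 2 + k * X) := by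
    unfold nm; ring
  rw [this]
  exact dvd_add h (dvd_mul_right _ _)

lemma nm_add_X (v : (ZMod 2)[X]) : nm (v + X) 1 = nm v 1 := by
  unfold nm
  linear_combination (v * X + X ^ 2) * two_zero

/-- The only monic linear polynomial dividing a value `nm c 1` with `c` constant is `X`, and then
`c = 0`: the affine cubic has `(0, 0)` as its only rational point. -/
lemma linear_case {u : (ZMod 2)[X]} (c : ZMod 2) (hu : u.natDegree = 1) (h : u ∣ nm (C c) 1) :
    u = X ∧ c = 0 := by
  obtain ⟨a, ha, e, rfl⟩ := natDegree_eq_one.mp hu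
  have ha1 : a = 1 := (by decide : ∀ a : ZMod 2, a ≠ 0 → a = 1) a ha
  subst ha1
  have hr : eval e (nm (C c) 1) = 0 := by
    obtain ⟨k, hk⟩ := h
    rw [hk, eval_mul]
    have : eval e (C 1 * X + C e) = 0 := by
      simp only [eval_add, eval_mul, eval_C, eval_X, one_mul]
      exact (by decide : ∀ e : ZMod 2, e + e = 0) e
    rw [this, zero_mul]
  simp only [nm, eval_add, eval_mul, eval_pow, eval_C, eval_X, eval_one] at hr
  have key : ∀ c e : ZMod 2, c ^ 2 + c * 1 * e + 1 ^ 2 * (e ^ 3 + e ^ 2 + e) = 0 →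
      e = 0 ∧ c = 0 := by decide
  obtain ⟨rfl, rfl⟩ := key c e hr
  simp

/-! ### Standard ideals -/

section Abstract

variable {R : Type*} [CommRing R] [Algebra (ZMod 2)[X] R]

local notation "ι" => algebraMap (ZMod 2)[X] R

/-- `R` is the ring `𝔽₂[x] ⊕ 𝔽₂[x] y` with `y ^ 2 + x y + x ^ 3 + x ^ 2 + x = 0`. The directness
of the sum is a consequence of the injectivity of `𝔽₂[x] → R`. -/
structure IsModel (y : R) : Prop where
  eqn : y ^ 2 + ι X * y + ι (X ^ 3 + X ^ 2 + X) = 0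
  inj : Function.Injective ι
  gen : ∀ r : R, ∃ a b, r = ι a + ι b * y

lemma two_zero' (R : Type*) [CommRing R] [Algebra (ZMod 2)[X] R] : (2 : R) = 0 := by
  have := congrArg (algebraMap (ZMod 2)[X] R) two_zero
  rwa [map_zero, map_ofNat] at this

namespace IsModel

variable {y : R} (H : IsModel y)
include H

lemma mul_formula (a b c d : (ZMod 2)[X]) :
    (ι a + ι b * y) * (ι c + ι d * y) =
      ι (a * c + b * d * (X ^ 3 + X ^ 2 + X)) + ι (a * d + b * c + b * d * X) * y := by
  have h := H.eqn
  simp only [map_add, map_mul, map_pow] at h ⊢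
  linear_combination ι b * ι d * h -
    ι b * ι d * (ι X * y + ι X ^ 3 + ι X ^ 2 + ι X) * two_zero' R

/-- The product of `a + b y` and its conjugate `a + b x + b y` is the norm. -/
lemma conj_mul (a b : (ZMod 2)[X]) :
    (ι (a + b * X) + ι b * y) * (ι a + ι b * y) = ι (nm a b) := by
  have h := H.eqn
  simp only [nm, map_add, map_mul, map_pow] at h ⊢
  linear_combination ι b ^ 2 * h + (ι a * ι b * y - ι b ^ 2 * (ι X ^ 3 + ι X ^ 2 + ι X)) * two_zero' R

lemma eq_zero {a b : (ZMod 2)[X]} (h : ι a + ι b * y = 0) : a = 0 ∧ b = 0 := by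
  have := H.conj_mul a b
  rw [h, mul_zero, ← map_zero ι] at this
  exact nm_eq_zero (H.inj this.symm)

lemma ext {a b c d : (ZMod 2)[X]} (h : ι a + ι b * y = ι c + ι d * y) : a = c ∧ b = d := by
  have := H.eq_zero (a := a - c) (b := b - d) (by
    simp only [map_sub]; linear_combination h)
  exact ⟨sub_eq_zero.mp this.1, sub_eq_zero.mp this.2⟩

end IsModel

/-- The ideal generated by `u` and `v + y`. -/
def stdIdeal (y : R) (u v : (ZMod 2)[X]) : Ideal R := Ideal.span {ι u, ι v + y}

lemma mem_stdIdeal {y : R} {u v : (ZMod 2)[X]} {r : R} :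
    r ∈ stdIdeal y u v ↔ ∃ s t, s * ι u + t * (ι v + y) = r := Ideal.mem_span_pair

lemma stdIdeal_le {y : R} {u v : (ZMod 2)[X]} {I : Ideal R} :
    stdIdeal y u v ≤ I ↔ ι u ∈ I ∧ ι v + y ∈ I := by
  rw [stdIdeal, Ideal.span_le, Set.pair_subset_iff]; rfl

lemma stdIdeal_mod (y : R) (u v : (ZMod 2)[X]) : stdIdeal y u v = stdIdeal y u (v % u) := by
  have h : ι v = ι (v % u) + ι u * ι (v / u) := by
    rw [← map_mul, ← map_add, EuclideanDomain.mod_add_div]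
  apply le_antisymm <;> rw [stdIdeal_le] <;> simp only [mem_stdIdeal]
  · exact ⟨⟨1, 0, by ring⟩, ι (v / u), 1, by rw [h]; ring⟩
  · exact ⟨⟨1, 0, by ring⟩, -ι (v / u), 1, by rw [h]; ring⟩

/-- Multiplying `(u, v + y)` by the conjugate of `v + y` and dividing by `u` replaces `u` by the
cofactor of `u` in the norm of `v + y`. -/
lemma IsModel.stdIdeal_swap {y : R} (H : IsModel y) {u u' v : (ZMod 2)[X]} (h : nm v 1 = u * u') :
    Ideal.span {ι (v + X) + y} * stdIdeal y u v = Ideal.span {ι u} * stdIdeal y u' (v + X) := by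
  have hc := H.conj_mul v 1
  rw [h] at hc
  simp only [map_one, one_mul, map_mul] at hc
  rw [stdIdeal, stdIdeal, Ideal.span_mul_span', Ideal.span_mul_span', Set.singleton_mul,
    Set.singleton_mul, Set.image_pair, Set.image_pair, hc, Set.pair_comm, mul_comm (ι u) (_ + y)]

/-- Hermite normal form: `d` generates the ideal of `y`-coefficients of elements of `I`, and `d * u`
generates the contraction of `I` to `𝔽₂[x]`. -/
lemma IsModel.exists_stdIdeal {y : R} (H : IsModel y) {I : Ideal R} (hI : I ≠ ⊥) :
    ∃ d u v : (ZMod 2)[X], d ≠ 0 ∧ u ≠ 0 ∧ u ∣ nm v 1 ∧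
      I = Ideal.span {ι d} * stdIdeal y u v := by
  have hy := H.eqn
  let J : Ideal (ZMod 2)[X] :=
    { carrier := {b | ∃ a, ι a + ι b * y ∈ I}
      zero_mem' := ⟨0, by simp⟩
      add_mem' := by
        rintro b b' ⟨a, h⟩ ⟨a', h'⟩
        refine ⟨a + a', ?_⟩
        convert I.add_mem h h' using 1
        simp only [map_add]; ring
      smul_mem' := by
        rintro c b ⟨a, h⟩
        refine ⟨c * a, ?_⟩
        convert I.mul_mem_left (ι c) h using 1
        simp only [map_mul, smul_eq_mul]; ring }
  obtain ⟨n, hn⟩ := (IsPrincipalIdealRing.principal (I.comap ι)).principal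
  obtain ⟨d, hd⟩ := (IsPrincipalIdealRing.principal J).principal
  have memZ : ∀ a, ι a ∈ I ↔ n ∣ a := fun a => by
    rw [← Ideal.mem_span_singleton, Ideal.span, ← hn, Ideal.mem_comap]
  have memJ : ∀ b, (∃ a, ι a + ι b * y ∈ I) ↔ d ∣ b := fun b => by
    rw [← Ideal.mem_span_singleton, Ideal.span, ← hd]; rfl
  have hn0 : n ≠ 0 := by
    rintro rfl
    obtain ⟨r, hr, hr0⟩ := Submodule.exists_mem_ne_zero_of_ne_bot hI
    obtain ⟨a, b, rfl⟩ := H.gen r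
    have h1 := I.mul_mem_left (ι (a + b * X) + ι b * y) hr
    rw [H.conj_mul, memZ, zero_dvd_iff] at h1
    obtain ⟨rfl, rfl⟩ := nm_eq_zero h1
    simp at hr0
  have hdn : d ∣ n := (memJ n).1 ⟨0, by
    rw [map_zero, zero_add]; exact I.mul_mem_right _ ((memZ n).2 dvd_rfl)⟩
  obtain ⟨u, rfl⟩ := hdn
  obtain ⟨a₀, ha₀⟩ := (memJ d).2 dvd_rfl
  -- `y (a₀ + d y)` lies in `I` and has `y`-coefficient `a₀ + d x` in characteristic two
  have hda : d ∣ a₀ := by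
    have h1 : d ∣ a₀ + d * X := (memJ _).1 ⟨d * (X ^ 3 + X ^ 2 + X), by
      convert I.mul_mem_left y ha₀ using 1
      simp only [map_add, map_mul, map_pow] at hy ⊢
      linear_combination -ι d * hy + ι d * (ι X ^ 3 + ι X ^ 2 + ι X + ι X * y) * two_zero' R⟩
    exact (dvd_add_left (dvd_mul_right _ _)).1 h1
  obtain ⟨v, rfl⟩ := hda
  have hd0 := left_ne_zero_of_mul hn0
  refine ⟨d, u, v, hd0, right_ne_zero_of_mul hn0, ?_, ?_⟩
  · have h1 := I.mul_mem_left (ι (v + 1 * X) + ι 1 * y) ha₀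
    have h2 : (ι (v + 1 * X) + ι 1 * y) * (ι (d * v) + ι d * y) = ι (d * nm v 1) := by
      rw [map_mul _ d (nm v 1), ← H.conj_mul]
      simp only [map_mul, map_one]; ring
    rw [h2, memZ] at h1
    exact (mul_dvd_mul_iff_left hd0).1 h1
  · apply le_antisymm
    · intro r hr
      obtain ⟨a, b, rfl⟩ := H.gen r
      obtain ⟨k, rfl⟩ := (memJ b).1 ⟨a, hr⟩
      have h1 : ι (a - k * (d * v)) ∈ I := by
        convert I.sub_mem hr (I.mul_mem_left (ι k) ha₀) using 1
        simp only [map_sub, map_mul]; ring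
      obtain ⟨m, hm⟩ := (memZ _).1 h1
      rw [Ideal.mem_span_singleton_mul]
      refine ⟨ι m * ι u + ι k * (ι v + y), mem_stdIdeal.2 ⟨_, _, rfl⟩, ?_⟩
      rw [sub_eq_iff_eq_add.1 hm]
      simp only [map_add, map_mul]; ring
    · rw [Ideal.span_singleton_mul_le_iff]
      intro z hz
      obtain ⟨s, t, rfl⟩ := mem_stdIdeal.1 hz
      convert I.add_mem (I.mul_mem_left s ((memZ _).2 dvd_rfl)) (I.mul_mem_left t ha₀) using 1
      simp only [map_mul]; ring

/-! ### Ideal classes -/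

/-- `I` and `J` lie in the same ideal class: `α I = β J` for some nonzero `α` and `β`. -/
def Equivalent (I J : Ideal R) : Prop :=
  ∃ α β : R, α ≠ 0 ∧ β ≠ 0 ∧ Ideal.span {α} * I = Ideal.span {β} * J

lemma Equivalent.trans {S : Type*} [CommRing S] [IsDomain S] {I J K : Ideal S}
    (h : Equivalent I J) (h' : Equivalent J K) :
    Equivalent I K := by
  obtain ⟨α, β, hα, hβ, e⟩ := h
  obtain ⟨γ, δ, hγ, hδ, e'⟩ := h'
  refine ⟨γ * α, β * δ, mul_ne_zero hγ hα, mul_ne_zero hβ hδ, ?_⟩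
  rw [← Ideal.span_singleton_mul_span_singleton, ← Ideal.span_singleton_mul_span_singleton,
    mul_assoc, e, mul_left_comm, e', mul_assoc]

lemma IsModel.map_ne_zero {y : R} (H : IsModel y) {a : (ZMod 2)[X]} (h : a ≠ 0) : ι a ≠ 0 :=
  fun h' => h (H.inj (by rw [h', map_zero]))

lemma IsModel.add_ne_zero {y : R} (H : IsModel y) (a : (ZMod 2)[X]) : ι a + y ≠ 0 := fun h =>
  one_ne_zero (H.eq_zero (a := a) (b := 1) (by rw [map_one, one_mul, h])).2

/-- Descent on the degree `n` of `u`, by reduction of `v` modulo `u` and `IsModel.stdIdeal_swap`. -/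
lemma IsModel.stdIdeal_equivalent [IsDomain R] {y : R} (H : IsModel y) (n : ℕ) :
    ∀ u v : (ZMod 2)[X], u.natDegree = n → u ≠ 0 → u ∣ nm v 1 →
      Equivalent (stdIdeal y u v) ⊤ ∨ Equivalent (stdIdeal y u v) (stdIdeal y X 0) := by
  induction n using Nat.strong_induction_on with
  | _ n ih =>
    intro u v hn hu huv
    rw [stdIdeal_mod]
    have hv : u ∣ nm (v % u) 1 := by
      have := dvd_nm_add_mul (-(v / u)) huv
      rwa [show v + u * -(v / u) = v % u by
        linear_combination -EuclideanDomain.mod_add_div v u] at this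
    rcases Nat.eq_zero_or_pos n with h0 | h0
    · left
      have h1 : IsUnit u := by
        rw [isUnit_iff_degree_eq_zero, degree_eq_natDegree hu, hn, h0]; rfl
      refine ⟨1, 1, one_ne_zero, one_ne_zero, ?_⟩
      rw [Ideal.eq_top_of_isUnit_mem (stdIdeal y u (v % u)) (stdIdeal_le.1 le_rfl).1
        (h1.map ι)]
    have hlt : (v % u).natDegree < u.natDegree := natDegree_mod_lt v (by omega)
    generalize v % u = w at hv hlt
    rcases Nat.lt_or_ge n 2 with h2 | h2
    · right
      have hw : w = C (w.coeff 0) := eq_C_of_natDegree_eq_zero (by omega)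
      rw [hw] at hv
      obtain ⟨rfl, hc⟩ := linear_case (w.coeff 0) (by omega) hv
      rw [hw, hc, map_zero]
      exact ⟨1, 1, one_ne_zero, one_ne_zero, rfl⟩
    · obtain ⟨u', hu'⟩ := hv
      have hN : nm w 1 ≠ 0 := fun h => one_ne_zero (nm_eq_zero h).2
      have hu'0 : u' ≠ 0 := by rintro rfl; simp [hu'] at hN
      have hdeg := natDegree_nm_one_lt u w (by omega) hlt
      rw [hu', natDegree_mul hu hu'0] at hdeg
      have e : Equivalent (stdIdeal y u w) (stdIdeal y u' (w + X)) :=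
        ⟨_, _, H.add_ne_zero _, H.map_ne_zero hu, H.stdIdeal_swap hu'⟩
      exact (ih u'.natDegree (by omega) u' (w + X) rfl hu'0
        (by rw [nm_add_X, hu']; exact dvd_mul_left _ _)).imp e.trans e.trans

lemma IsModel.equivalent [IsDomain R] {y : R} (H : IsModel y) {I : Ideal R} (hI : I ≠ ⊥) :
    Equivalent I ⊤ ∨ Equivalent I (stdIdeal y X 0) := by
  obtain ⟨d, u, v, hd, hu, huv, rfl⟩ := H.exists_stdIdeal hI
  have e : Equivalent (Ideal.span {ι d} * stdIdeal y u v) (stdIdeal y u v) :=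
    ⟨1, ι d, one_ne_zero, H.map_ne_zero hd, by
      rw [Ideal.span_singleton_one, ← Ideal.one_eq_top, one_mul]⟩
  exact (H.stdIdeal_equivalent _ u v rfl hu huv).imp e.trans e.trans

/-- Evaluation at the point `(0, 0)` kills `(x, y)`; in coordinates, the constant component of an
element of `(x, y)` is divisible by `x`. -/
lemma IsModel.stdIdeal_ne_top {y : R} (H : IsModel y) : stdIdeal y X 0 ≠ ⊤ := by
  rw [Ideal.ne_top_iff_one, mem_stdIdeal]
  rintro ⟨s, t, h⟩
  obtain ⟨s₀, s₁, rfl⟩ := H.gen s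
  obtain ⟨t₀, t₁, rfl⟩ := H.gen t
  have e1 := H.mul_formula s₀ s₁ X 0
  have e2 := H.mul_formula t₀ t₁ 0 1
  simp only [map_zero, map_one, zero_mul, one_mul, add_zero, zero_add] at e1 e2 h
  rw [e1, e2] at h
  have h' := (H.ext (a := s₀ * X + s₁ * 0 * (X ^ 3 + X ^ 2 + X) +
    (t₀ * 0 + t₁ * 1 * (X ^ 3 + X ^ 2 + X)))
    (b := s₀ * 0 + s₁ * X + s₁ * 0 * X + (t₀ * 1 + t₁ * 0 + t₁ * 1 * X)) (c := 1) (d := 0) (by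
      rw [map_add, map_add ι (s₀ * 0 + s₁ * X + s₁ * 0 * X)]
      simp only [map_zero, map_one]
      linear_combination h)).1
  have := congrArg (eval 0) h'
  simp at this

/-- A generator of `(x, y)` would divide `x`, so its norm would have degree at most `2`; this
forces it to be a polynomial in `x`, and a polynomial dividing `y` is a unit. -/
lemma IsModel.not_isPrincipal {y : R} (H : IsModel y) : ¬ (stdIdeal y X 0).IsPrincipal := by
  rintro ⟨g, hg⟩
  rw [← Ideal.span] at hg
  obtain ⟨hx, hy⟩ := stdIdeal_le.1 hg.le
  rw [Ideal.mem_span_singleton] at hx hy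
  obtain ⟨a, b, rfl⟩ := H.gen g
  obtain ⟨r, hr⟩ := hx
  obtain ⟨c, d, rfl⟩ := H.gen r
  rw [H.mul_formula] at hr
  have h1 := H.ext (a := X) (b := 0) (by
    rw [← hr, map_zero ι, zero_mul, add_zero])
  have h2 := nm_mul a b c d
  rw [← h1.1, ← h1.2] at h2
  have h3 : nm X 0 = X ^ 2 := by simp [nm]
  have hb : b = 0 := by
    by_contra hb
    have h4 := three_le_natDegree_nm a b hb
    rw [h3] at h2
    have h5 : nm a b * nm c d ≠ 0 := by rw [← h2]; exact pow_ne_zero _ X_ne_zero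
    have h6 := congrArg natDegree h2
    rw [natDegree_mul (left_ne_zero_of_mul h5) (right_ne_zero_of_mul h5), natDegree_X_pow] at h6
    omega
  subst hb
  obtain ⟨s, hs⟩ := hy
  obtain ⟨e, f, rfl⟩ := H.gen s
  rw [H.mul_formula] at hs
  have h7 := (H.ext (a := 0) (b := 1) (by
    rw [← hs, map_one, one_mul])).2
  have h8 : IsUnit a := IsUnit.of_mul_eq_one f (by simpa using h7.symm)
  apply H.stdIdeal_ne_top
  rw [hg, Ideal.span_singleton_eq_top]
  simpa using h8.map ι

lemma IsModel.card_classGroup [IsDedekindDomain R] {y : R} (H : IsModel y) :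
    Nat.card (ClassGroup R) = 2 := by
  have hM : stdIdeal y X 0 ∈ nonZeroDivisors (Ideal R) := by
    rw [mem_nonZeroDivisors_iff_ne_zero]
    intro h
    have := (stdIdeal_le.1 h.le).1
    exact H.map_ne_zero X_ne_zero (by simpa using this)
  rw [Nat.card_eq_two_iff]
  refine ⟨1, ClassGroup.mk0 ⟨_, hM⟩, fun h => H.not_isPrincipal
    ((ClassGroup.mk0_eq_one_iff hM).1 h.symm), Set.eq_univ_of_forall fun c => ?_⟩
  obtain ⟨⟨I, hI⟩, rfl⟩ := ClassGroup.mk0_surjective c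
  rcases H.equivalent (mem_nonZeroDivisors_iff_ne_zero.1 hI) with
    ⟨α, β, hα, hβ, h⟩ | ⟨α, β, hα, hβ, h⟩
  · left
    rw [← map_one ClassGroup.mk0, ClassGroup.mk0_eq_mk0_iff]
    exact ⟨α, β, hα, hβ, by simpa using h⟩
  · right
    exact ClassGroup.mk0_eq_mk0_iff.2 ⟨α, β, hα, hβ, h⟩

end Abstract

/-! ### The ring of integers -/

/-- The integrality computation: if `z = a + b y` has polynomial trace `b x = c` and polynomial norm
`m`, and `x a = d`, then `x` divides both `c` and `d`. -/
lemma X_dvd_of_norm {c d m : (ZMod 2)[X]}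
    (h : d ^ 2 + d * c * X + c ^ 2 * (X ^ 3 + X ^ 2 + X) = X ^ 2 * m) : X ∣ c ∧ X ∣ d := by
  have hd : X ∣ d := prime_X.dvd_of_dvd_pow (n := 2)
    ⟨X * m - d * c - c ^ 2 * (X ^ 2 + X + 1), by linear_combination h⟩
  refine ⟨?_, hd⟩
  obtain ⟨e, rfl⟩ := hd
  have h1 : c ^ 2 = X * (m - e ^ 2 - e * c - c ^ 2 * (X + 1)) := by
    apply mul_left_cancel₀ (X_ne_zero (R := ZMod 2))
    linear_combination h
  exact prime_X.dvd_of_dvd_pow (n := 2) ⟨_, h1⟩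

theorem class_group_statement_3
    (f : Polynomial (RatFunc (ZMod 2)))
    (hf : f = X ^ 2 + C RatFunc.X * X + C (RatFunc.X * (RatFunc.X ^ 2 + RatFunc.X + 1)))
    [Fact (Irreducible f)] :
    IsCyclic (ClassGroup (FunctionField.ringOfIntegers (ZMod 2) (AdjoinRoot f))) ∧
      Nat.card (ClassGroup (FunctionField.ringOfIntegers (ZMod 2) (AdjoinRoot f))) = 2 := by
  have irr : Irreducible f := Fact.out
  have hmonic : f.Monic := by rw [hf]; monicity!
  have hdeg : f.natDegree = 2 := by rw [hf]; compute_degree!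
  let F := RatFunc (ZMod 2)
  let K := AdjoinRoot f
  let x : F := RatFunc.X
  let j : F →+* K := algebraMap F K
  let y : K := AdjoinRoot.root f
  have h2K : (2 : K) = 0 := two_zero' K
  have hy : y ^ 2 + j x * y + j (x * (x ^ 2 + x + 1)) = 0 := by
    have h : eval₂ j y f = 0 := AdjoinRoot.eval₂_root f
    have h' := congrArg (eval₂ j y) hf
    rw [h] at h'
    simp only [eval₂_add, eval₂_mul, eval₂_pow, eval₂_X, eval₂_C] at h'
    exact h'.symm
  have hx0 : x ≠ 0 := RatFunc.X_ne_zero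
  have rep : ∀ z : K, ∃ a b : F, z = j a + j b * y := by
    intro z
    obtain ⟨p, rfl⟩ := AdjoinRoot.mk_surjective z
    have h1 : (p %ₘ f).natDegree ≤ 1 := by
      have := natDegree_modByMonic_lt p hmonic (by rintro rfl; simp at hdeg)
      omega
    obtain ⟨b, a, h2⟩ := exists_eq_X_add_C_of_natDegree_le_one h1
    refine ⟨a, b, ?_⟩
    have h3 : AdjoinRoot.mk f p = AdjoinRoot.mk f (p %ₘ f) := by
      conv_lhs => rw [← modByMonic_add_div p f]
      rw [map_add, map_mul, AdjoinRoot.mk_self, zero_mul, add_zero]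
    rw [h3, h2, map_add, map_mul, AdjoinRoot.mk_X, AdjoinRoot.mk_C, AdjoinRoot.mk_C, add_comm]
    rfl
  have sep : Algebra.IsSeparable F K := by
    have hfs : f.Separable := by
      rw [separable_iff_derivative_ne_zero irr]
      intro h
      have h1 := congrArg (fun p => coeff p 0) h
      rw [hf] at h1
      simp only [derivative_add, derivative_C_mul, derivative_X, derivative_C, derivative_X_pow]
        at h1
      exact hx0 (by simpa using h1)
    have hys : IsSeparable F y := hfs.of_dvd (minpoly.dvd F y (AdjoinRoot.eval₂_root f))
    rw [← separableClosure.eq_top_iff, eq_top_iff]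
    intro z _
    obtain ⟨a, b, rfl⟩ := rep z
    exact add_mem (IntermediateField.algebraMap_mem _ a)
      (mul_mem (IntermediateField.algebraMap_mem _ b) (mem_separableClosure_iff.2 hys))
  have fin : FiniteDimensional F K := (AdjoinRoot.powerBasis' hmonic).finite
  have tower : ∀ p : (ZMod 2)[X], algebraMap (ZMod 2)[X] K p = j (algebraMap (ZMod 2)[X] F p) :=
    fun p => IsScalarTower.algebraMap_apply _ F K p
  have hX : algebraMap (ZMod 2)[X] F X = x := RatFunc.algebraMap_X
  have hFinj : Function.Injective (algebraMap (ZMod 2)[X] F) := IsFractionRing.injective _ _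
  have hyK : y ^ 2 + algebraMap (ZMod 2)[X] K X * y +
      algebraMap (ZMod 2)[X] K (X ^ 3 + X ^ 2 + X) = 0 := by
    simp only [tower, map_add, map_mul, map_pow, hX, map_one] at hy ⊢
    linear_combination hy
  have hyint : IsIntegral (ZMod 2)[X] y := by
    refine ⟨X ^ 2 + C X * X + C (X ^ 3 + X ^ 2 + X), by monicity!, ?_⟩
    simp only [eval₂_add, eval₂_mul, eval₂_pow, eval₂_X, eval₂_C]
    simpa only [map_add, map_pow] using hyK
  have hconj : eval₂ (Algebra.ofId F K : F →+* K) (y + j x) f = 0 := by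
    refine (congrArg (eval₂ j (y + j x)) hf).trans ?_
    simp only [eval₂_add, eval₂_mul, eval₂_pow, eval₂_X, eval₂_C]
    change (y + j x) ^ 2 + j x * (y + j x) + j (x * (x ^ 2 + x + 1)) = 0
    linear_combination hy + (j x * y + j x ^ 2) * h2K
  -- the nontrivial automorphism of `K` over `F`, which gives access to trace and norm
  let σ : K →ₐ[F] K := AdjoinRoot.liftAlgHom f (Algebra.ofId F K) (y + j x) hconj
  have hσy : σ y = y + j x := AdjoinRoot.liftAlgHom_root ..
  have hσj : ∀ a, σ (j a) = j a := σ.commutes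
  -- `𝔽₂[x]` is integrally closed, so integral elements of the base field are polynomials
  have descend : ∀ a : F, IsIntegral (ZMod 2)[X] (j a) → ∃ p, algebraMap (ZMod 2)[X] F p = a :=
    fun a h => IsIntegrallyClosed.isIntegral_iff.1
      ((isIntegral_algebraMap_iff (algebraMap F K).injective).1 h)
  have model : IsModel (R := FunctionField.ringOfIntegers (ZMod 2) K) ⟨y, hyint⟩ := by
    refine ⟨Subtype.ext hyK, FunctionField.ringOfIntegers.algebraMap_injective (ZMod 2) K, ?_⟩
    rintro ⟨z, hz⟩
    replace hz : IsIntegral (ZMod 2)[X] z := hz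
    obtain ⟨a, b, rfl⟩ := rep z
    have hσz : σ (j a + j b * y) = j a + j b * (y + j x) := by
      rw [map_add, map_mul, hσj, hσj, hσy]
    have hzσ := hz.map σ
    rw [hσz] at hzσ
    have hjx : IsIntegral (ZMod 2)[X] (j x) := by
      rw [← hX, ← tower]; exact isIntegral_algebraMap
    -- trace and norm of `z` are polynomials, and so is `x a`, as `x a = x z - (b x) y`
    obtain ⟨c, hc⟩ := descend (b * x) (by
      have h : j (b * x) = (j a + j b * y) + (j a + j b * (y + j x)) := by
        rw [map_mul]
        linear_combination -(j a + j b * y) * h2K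
      rw [h]
      exact hz.add hzσ)
    obtain ⟨m, hm⟩ := descend (a ^ 2 + a * b * x + b ^ 2 * (x * (x ^ 2 + x + 1))) (by
      have h : j (a ^ 2 + a * b * x + b ^ 2 * (x * (x ^ 2 + x + 1))) =
          (j a + j b * y) * (j a + j b * (y + j x)) := by
        simp only [map_add, map_mul, map_pow, map_one] at hy ⊢
        linear_combination -j b ^ 2 * hy + (-j a * j b * y +
          j b ^ 2 * (j x * (j x ^ 2 + j x + 1))) * h2K
      rw [h]
      exact hz.mul hzσ)
    obtain ⟨d, hd⟩ := descend (x * a) (by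
      have h1 : IsIntegral (ZMod 2)[X] (j (b * x)) := by
        rw [← hc, ← tower]; exact isIntegral_algebraMap
      have h : j (x * a) = j x * (j a + j b * y) - j (b * x) * y := by
        simp only [map_mul]; ring
      rw [h]
      exact (hjx.mul hz).sub (h1.mul hyint))
    obtain ⟨⟨c, rfl⟩, ⟨d, rfl⟩⟩ := X_dvd_of_norm (c := c) (d := d) (m := m) (hFinj (by
      simp only [map_add, map_mul, map_pow, hX, hc, hd, hm]
      ring))
    rw [map_mul, hX] at hc hd
    refine ⟨d, c, Subtype.ext ?_⟩
    change j a + j b * y = algebraMap (ZMod 2)[X] K d + algebraMap (ZMod 2)[X] K c * y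
    rw [tower, tower, mul_left_cancel₀ hx0 hd, mul_left_cancel₀ hx0 (hc.trans (mul_comm _ _))]
  have card := model.card_classGroup
  exact ⟨isCyclic_of_prime_card card, card⟩
end

section
/- Let K = F_2(x)(y) where y satisfies y^2 + (x^2 + x + 1)·y + (x^2 + x + 1)(x^3 + x + 1) = 0 (this quadratic polynomial in y is irreducible over F_2(x)). Then the ideal class group Cl(O_K), where O_K is the integral closure of F_2[x] in K, is cyclic of order 2. -/
/-!
Write `h = x² + x + 1` and `g = x³ + x + 1`, so that `y² + h y + h g = 0`.

The maximal order is `O = 𝔽₂[x] ⊕ 𝔽₂[x] y`: for an integral `z = a + c y`, adding the conjugate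
`a + c (y + h)` shows that `B = c h` is a polynomial, hence so is `A = a h`, and the norm
gives `A² + A B h + B² h g = h² n`; as `h` is prime and does not divide `g`, it divides `A` and `B`
(`ringOfIntegers_isGen`).

The curve has genus two and one point at infinity, and the Riemann-Roch bound becomes elementary:
if `I` has colength `n`, the elements `a + c y` of `O` with suitable degree bounds on `a` and `c`
form a space of dimension at least `n + 1`, all of them with norm of degree at most `n + 2`. So `I`
contains a nonzero `z` with `I * J = (z)` and `J` of colength at most `2` (`IsGen.exists_small`).

Such a `J` contains a nonzero polynomial of degree at most `2`, so a prime above `J` contains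
`x`, `x + 1` or `h`. Modulo `x` and `x + 1` the equation of `y` is the irreducible `y² + y + 1`, so
`(x)` and `(x + 1)` are prime, and principal. The prime above `h` is `P = (h, y)`, with
`P² = (h)` since `g` is a unit modulo `h`. Hence the class group is generated by the class of `P`.
Finally `P` is not principal: a generator `a + c y` would have norm `a² + a c h + c² h g` equal
to `h` up to a unit, but this norm has degree at least `5` when `c ≠ 0` and is a square when
`c = 0` (`IsGen.not_principal`).
-/

open Polynomial

namespace HyperellipticF2

/-! ### Colength of products of ideals -/

open Submodule in
/-- The version of `_root_.cardQuot_mul` without freeness over `ℤ`, which fails in positive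
characteristic: infinitude of `S` is enough. -/
theorem cardQuot_mul {S : Type*} [CommRing S] [IsDedekindDomain S] [Infinite S] (I J : Ideal S) :
    cardQuot (I * J) = cardQuot I * cardQuot J :=
  UniqueFactorizationMonoid.multiplicative_of_coprime cardQuot I J (cardQuot_bot _ _)
    (fun {I J} hI => by simp [Ideal.isUnit_iff.mp hI, Ideal.mul_top])
    (fun {I} i hI =>
      have : Ideal.IsPrime I := Ideal.isPrime_of_prime hI
      cardQuot_pow_of_prime hI.ne_zero)
    fun {I J} hIJ => cardQuot_mul_of_coprime <| Ideal.isCoprime_iff_sup_eq.mpr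
      (Ideal.isUnit_iff.mp
        (hIJ (Ideal.dvd_iff_le.mpr le_sup_left) (Ideal.dvd_iff_le.mpr le_sup_right)))

/-! ### The polynomials `h`, `g` and the norm form -/

/-- The coefficient `x² + x + 1` of `y`; it generates the only ramified prime of `𝔽₂[x]`. -/
noncomputable def h : (ZMod 2)[X] := X ^ 2 + X + 1
/-- The cofactor `x³ + x + 1` in the constant term `h g`. -/
noncomputable def g : (ZMod 2)[X] := X ^ 3 + X + 1

lemma natDegree_h : h.natDegree = 2 := by unfold h; compute_degree!
lemma natDegree_g : g.natDegree = 3 := by unfold g; compute_degree!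
lemma h_ne_zero : h ≠ 0 := fun e => by have := natDegree_h; simp [e] at this
lemma g_ne_zero : g ≠ 0 := fun e => by have := natDegree_g; simp [e] at this

lemma irreducible_h : Irreducible h := by
  rw [Polynomial.irreducible_iff_roots_eq_zero_of_degree_le_three (by rw [natDegree_h])
    (by rw [natDegree_h]; norm_num)]
  refine Multiset.eq_zero_of_forall_notMem fun a ha => ?_
  have := Polynomial.isRoot_of_mem_roots ha
  simp only [h, IsRoot.def, eval_add, eval_pow, eval_X, eval_one] at this
  clear ha
  revert a; decide

lemma not_h_dvd_g : ¬ h ∣ g := by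
  intro hd
  have hX : h ∣ X := by
    have e : X = g + h * (X + 1) := by
      unfold g h; linear_combination (-1 - X - X ^ 2 - X ^ 3 : (ZMod 2)[X]) *
        CharTwo.two_eq_zero (R := (ZMod 2)[X])
    rw [e]; exact dvd_add hd (dvd_mul_right _ _)
  have := natDegree_le_of_dvd hX X_ne_zero
  rw [natDegree_h, natDegree_X] at this
  omega

/-- The norm of `a + c y`. Signs are dropped, the characteristic being two. -/
noncomputable def nf (a c : (ZMod 2)[X]) : (ZMod 2)[X] := a ^ 2 + a * c * h + c ^ 2 * h * g

lemma natDegree_nf_le {a c : (ZMod 2)[X]} {N : ℕ} (ha : 2 * a.natDegree ≤ N)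
    (hc : c = 0 ∨ 2 * c.natDegree + 5 ≤ N) : (nf a c).natDegree ≤ N := by
  have h1 : (a ^ 2).natDegree ≤ N := natDegree_pow_le.trans ha
  rcases hc with rfl | hc
  · simpa [nf] using h1
  · unfold nf
    refine natDegree_add_le_of_degree_le (natDegree_add_le_of_degree_le h1 ?_) ?_
    · refine (natDegree_mul_le.trans (Nat.add_le_add_right natDegree_mul_le _)).trans ?_
      rw [natDegree_h]; omega
    · refine (natDegree_mul_le.trans (Nat.add_le_add_right natDegree_mul_le _)).trans ?_
      have := natDegree_pow_le (p := c) (n := 2)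
      rw [natDegree_h, natDegree_g]; omega

/-- In `a² + a c h + c² h g` the outer terms have degrees of different parity and the larger
one dominates the middle term, so no cancellation occurs. -/
lemma five_le_natDegree_nf {a c : (ZMod 2)[X]} (hc : c ≠ 0) : 5 ≤ (nf a c).natDegree := by
  have hC : (c ^ 2 * h * g).natDegree = 2 * c.natDegree + 5 := by
    rw [natDegree_mul (mul_ne_zero (pow_ne_zero _ hc) h_ne_zero) g_ne_zero,
      natDegree_mul (pow_ne_zero _ hc) h_ne_zero, natDegree_pow, natDegree_h, natDegree_g]
  have hB : (a * c * h).natDegree ≤ a.natDegree + c.natDegree + 2 := by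
    refine (natDegree_mul_le.trans (Nat.add_le_add_right natDegree_mul_le _)).trans ?_
    rw [natDegree_h]
  have hA : (a ^ 2).natDegree = 2 * a.natDegree := natDegree_pow _ _
  unfold nf
  rcases le_or_gt a.natDegree (c.natDegree + 2) with hle | hlt
  · rw [natDegree_add_eq_right_of_natDegree_lt, hC]
    · omega
    · rw [hC]
      refine (natDegree_add_le _ _).trans_lt ?_
      omega
  · rw [add_assoc, natDegree_add_eq_left_of_natDegree_lt, hA]
    · omega
    · rw [hA]
      refine (natDegree_add_le _ _).trans_lt ?_
      omega

/-! ### The order generated by `y` -/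

section Ring

variable {O : Type*} [CommRing O] [Algebra (ZMod 2)[X] O] {y : O}

/-- `y` is a root of `Y² + h Y + h g`, and `1, y` is a basis of `O` over `𝔽₂[x]`. -/
structure IsGen (y : O) : Prop where
  eq : y ^ 2 + algebraMap _ O h * y + algebraMap _ O (h * g) = 0
  exists_repr : ∀ z : O, ∃ a c : (ZMod 2)[X], z = algebraMap _ O a + algebraMap _ O c * y
  eq_zero : ∀ a c : (ZMod 2)[X], algebraMap _ O a + algebraMap _ O c * y = 0 → a = 0 ∧ c = 0

namespace IsGen

/-- The basis `1, y` of `O` over `𝔽₂[x]`. -/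
noncomputable def basis (hy : IsGen y) : Module.Basis (Fin 2) (ZMod 2)[X] O :=
  .mk (v := ![1, y])
    (by
      rw [LinearIndependent.pair_iff]
      intro s t hst
      exact hy.eq_zero s t (by simpa [Algebra.smul_def] using hst))
    (by
      rintro z -
      obtain ⟨a, c, rfl⟩ := hy.exists_repr z
      rw [← mul_one (algebraMap _ O a), ← Algebra.smul_def, ← Algebra.smul_def]
      exact add_mem (Submodule.smul_mem _ _ (Submodule.subset_span ⟨0, rfl⟩))
        (Submodule.smul_mem _ _ (Submodule.subset_span ⟨1, rfl⟩)))

lemma repr_eq (hy : IsGen y) (a c : (ZMod 2)[X]) :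
    ⇑(hy.basis.repr (algebraMap _ O a + algebraMap _ O c * y)) = ![a, c] := by
  have e : algebraMap _ O a + algebraMap _ O c * y = hy.basis.equivFun.symm ![a, c] := by
    simp [Module.Basis.equivFun_symm_apply, basis, Algebra.smul_def]
  rw [e, ← Module.Basis.equivFun_apply, LinearEquiv.apply_symm_apply]

lemma norm_eq (hy : IsGen y) (a c : (ZMod 2)[X]) :
    Algebra.norm (ZMod 2)[X] (algebraMap _ O a + algebraMap _ O c * y) = nf a c := by
  have e : (algebraMap _ O a + algebraMap _ O c * y) * y =
      algebraMap _ O (-(c * h * g)) + algebraMap _ O (a - c * h) * y := by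
    simp only [map_neg, map_mul, map_sub]
    have := hy.eq
    rw [map_mul] at this
    linear_combination algebraMap _ O c * this
  rw [Algebra.norm_eq_matrix_det hy.basis, Matrix.det_fin_two]
  simp only [Algebra.leftMulMatrix_eq_repr_mul]
  have b0 : hy.basis 0 = 1 := by simp [basis]
  have b1 : hy.basis 1 = y := by simp [basis]
  rw [b0, b1, mul_one, e, hy.repr_eq, hy.repr_eq]
  simp only [nf, Matrix.cons_val_zero, Matrix.cons_val_one]
  linear_combination (-a * c * h) * CharTwo.two_eq_zero (R := (ZMod 2)[X])

lemma injective (hy : IsGen y) : Function.Injective (algebraMap (ZMod 2)[X] O) := by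
  rw [injective_iff_map_eq_zero]
  intro a ha
  exact (hy.eq_zero a 0 (by simpa using ha)).1

lemma infinite (hy : IsGen y) : Infinite O := Infinite.of_injective _ hy.injective

variable [Algebra (ZMod 2) O] [IsScalarTower (ZMod 2) (ZMod 2)[X] O]

lemma finite_quotient (hy : IsGen y) [IsDomain O] {I : Ideal O} (hI : I ≠ ⊥) :
    Module.Finite (ZMod 2) (O ⧸ I) :=
  Module.Finite.equiv (Ideal.quotientEquivDirectSum (ZMod 2) hy.basis hI).symm

lemma card_quotient (hy : IsGen y) [IsDomain O] {I : Ideal O} (hI : I ≠ ⊥) :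
    Submodule.cardQuot I = 2 ^ Module.finrank (ZMod 2) (O ⧸ I) := by
  have := hy.finite_quotient hI
  rw [Submodule.cardQuot_apply, Module.natCard_eq_pow_finrank (K := ZMod 2), Nat.card_zmod]

lemma finrank_mul (hy : IsGen y) [IsDedekindDomain O] {I J : Ideal O} (hI : I ≠ ⊥) (hJ : J ≠ ⊥) :
    Module.finrank (ZMod 2) (O ⧸ (I * J)) =
      Module.finrank (ZMod 2) (O ⧸ I) + Module.finrank (ZMod 2) (O ⧸ J) := by
  have := hy.infinite
  have e := cardQuot_mul I J
  rw [hy.card_quotient hI, hy.card_quotient hJ, hy.card_quotient (mul_ne_zero hI hJ), ← pow_add] at e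
  exact Nat.pow_right_injective le_rfl e

/-- Pigeonhole in the form of linear algebra: an ideal of colength less than `m + n` contains a
nonzero `a + c y` with `deg a < m` and `deg c < n`. -/
lemma exists_mem (hy : IsGen y) [IsDomain O] {I : Ideal O} (hI : I ≠ ⊥) {m n : ℕ}
    (hmn : Module.finrank (ZMod 2) (O ⧸ I) < m + n) :
    ∃ a ∈ degreeLT (ZMod 2) m, ∃ c ∈ degreeLT (ZMod 2) n,
      algebraMap _ O a + algebraMap _ O c * y ∈ I ∧ algebraMap _ O a + algebraMap _ O c * y ≠ 0 := by
  have := hy.finite_quotient hI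
  have (k : ℕ) : Module.Finite (ZMod 2) (degreeLT (ZMod 2) k) :=
    Module.Finite.equiv (degreeLTEquiv (ZMod 2) k).symm
  have fr (k : ℕ) : Module.finrank (ZMod 2) (degreeLT (ZMod 2) k) = k := by
    rw [(degreeLTEquiv (ZMod 2) k).finrank_eq, Module.finrank_fin_fun]
  let A : (ZMod 2)[X] →ₗ[ZMod 2] O := (IsScalarTower.toAlgHom (ZMod 2) (ZMod 2)[X] O).toLinearMap
  let φ : degreeLT (ZMod 2) m × degreeLT (ZMod 2) n →ₗ[ZMod 2] O ⧸ I :=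
    (Ideal.Quotient.mkₐ (ZMod 2) I).toLinearMap ∘ₗ
      LinearMap.coprod (A ∘ₗ (degreeLT (ZMod 2) m).subtype)
        (LinearMap.mulRight (ZMod 2) y ∘ₗ A ∘ₗ (degreeLT (ZMod 2) n).subtype)
  have hφ : LinearMap.ker φ ≠ ⊥ := LinearMap.ker_ne_bot_of_finrank_lt (by
    rw [Module.finrank_prod, fr, fr]; exact hmn)
  obtain ⟨⟨⟨a, ha⟩, ⟨c, hc⟩⟩, hk, h0⟩ := Submodule.exists_mem_ne_zero_of_ne_bot hφ
  refine ⟨a, ha, c, hc, ?_, fun e => h0 ?_⟩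
  · exact Ideal.Quotient.eq_zero_iff_mem.mp hk
  · obtain ⟨rfl, rfl⟩ := hy.eq_zero a c e
    rfl

lemma natDegree_le_of_mem_degreeLT {a : (ZMod 2)[X]} {m : ℕ} (ha : a ∈ degreeLT (ZMod 2) (m + 1)) :
    a.natDegree ≤ m := by
  rw [degreeLT_succ_eq_degreeLE, mem_degreeLE] at ha
  exact natDegree_le_of_degree_le ha

/-- Every nonzero ideal is inverse in the class group to an ideal of colength at most two. -/
lemma exists_small (hy : IsGen y) [IsDedekindDomain O] {I : Ideal O} (hI : I ≠ ⊥) :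
    ∃ J : Ideal O, J ≠ ⊥ ∧ Module.finrank (ZMod 2) (O ⧸ J) ≤ 2 ∧
      ∃ z : O, z ≠ 0 ∧ I * J = Ideal.span {z} := by
  set n := Module.finrank (ZMod 2) (O ⧸ I) with hn
  -- The bounds `deg a ≤ n / 2 + 1` and `deg c ≤ (n + 1) / 2 - 2` (that is, `c = 0` if `n ≤ 2`) allow
  -- at least `n + 1` parameters, with `2 deg a` and, for `c ≠ 0`, `2 deg c + 5` at most `n + 2`.
  obtain ⟨a, ha, c, hc, hzI, hz0⟩ := hy.exists_mem hI (m := n / 2 + 1 + 1) (n := (n + 1) / 2 - 1)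
    (by omega)
  set z := algebraMap _ O a + algebraMap _ O c * y with hz
  obtain ⟨J, hJ⟩ : I ∣ Ideal.span {z} := Ideal.dvd_span_singleton.mpr hzI
  have hz0' : Ideal.span {z} ≠ ⊥ := by simpa using hz0
  have hJ0 : J ≠ ⊥ := by rintro rfl; simp at hJ; exact hz0 hJ
  refine ⟨J, hJ0, ?_, z, hz0, hJ.symm⟩
  have e1 := finrank_quotient_span_eq_natDegree_norm (F := ZMod 2) hy.basis hz0
  rw [hJ, hy.finrank_mul hI hJ0, hz, hy.norm_eq, ← hn] at e1
  have e2 : (nf a c).natDegree ≤ n + 2 := by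
    refine natDegree_nf_le (by have := natDegree_le_of_mem_degreeLT ha; omega) ?_
    rcases hk : (n + 1) / 2 - 1 with _ | k
    · left
      rw [hk, mem_degreeLT] at hc
      simpa [Nat.WithBot.lt_zero_iff] using hc
    · right
      rw [hk] at hc
      have := natDegree_le_of_mem_degreeLT hc
      omega
  omega

lemma exists_poly_mem (hy : IsGen y) [IsDomain O] {J : Ideal O} (hJ : J ≠ ⊥)
    (h2 : Module.finrank (ZMod 2) (O ⧸ J) ≤ 2) :
    ∃ a : (ZMod 2)[X], a ≠ 0 ∧ a.natDegree ≤ 2 ∧ algebraMap _ O a ∈ J := by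
  obtain ⟨a, ha, c, hc, hm, h0⟩ := hy.exists_mem hJ (m := 2 + 1) (n := 0) (by omega)
  obtain rfl : c = 0 := by
    rw [mem_degreeLT] at hc
    simpa [Nat.WithBot.lt_zero_iff] using hc
  refine ⟨a, ?_, natDegree_le_of_mem_degreeLT ha, by simpa using hm⟩
  rintro rfl
  simp at h0

omit [Algebra (ZMod 2) O] [IsScalarTower (ZMod 2) (ZMod 2)[X] O]

lemma two_eq_zero : (2 : O) = 0 := by
  have := congrArg (algebraMap (ZMod 2)[X] O) (CharTwo.two_eq_zero (R := (ZMod 2)[X]))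
  rwa [map_ofNat, map_zero] at this

/-! ### Primes of small degree -/

lemma prime_cases {p : Ideal O} (hp : p.IsPrime) {a : (ZMod 2)[X]} (ha0 : a ≠ 0)
    (hd : a.natDegree ≤ 2) (ha : algebraMap _ O a ∈ p) :
    (∃ s : ZMod 2, algebraMap _ O (X - C s) ∈ p) ∨ algebraMap _ O h ∈ p := by
  have e : a = C (a.coeff 2) * X ^ 2 + C (a.coeff 1) * X + C (a.coeff 0) := by
    conv_lhs => rw [as_sum_range_C_mul_X_pow' a (n := 3) (by omega)]
    simp [Finset.sum_range_succ]; ring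
  have h2 : (2 : O) = 0 := two_eq_zero
  have two : ∀ u : ZMod 2, u = 0 ∨ u = 1 := by decide
  generalize a.coeff 2 = u at e
  generalize a.coeff 1 = v at e
  generalize a.coeff 0 = w at e
  subst e
  have X0 : algebraMap _ O X ∈ p → ∃ s : ZMod 2, algebraMap _ O (X - C s) ∈ p :=
    fun hm => ⟨0, by simpa using hm⟩
  have X1 : algebraMap _ O X + 1 ∈ p → ∃ s : ZMod 2, algebraMap _ O (X - C s) ∈ p :=
    fun hm => ⟨1, by
      convert hm using 1
      simp only [map_sub, map_one]
      linear_combination -h2⟩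
  have n1 : (1 : O) ∉ p := fun h1 => hp.ne_top ((Ideal.eq_top_iff_one _).mpr h1)
  rcases two u with rfl | rfl <;> rcases two v with rfl | rfl <;> rcases two w with rfl | rfl <;>
    simp only [map_zero, map_one, zero_mul, one_mul, zero_add, add_zero, map_add, map_pow] at ha
  · simp at ha0
  · exact absurd ha n1
  · exact .inl (X0 ha)
  · exact .inl (X1 ha)
  · exact .inl (X0 (hp.mem_of_pow_mem _ ha))
  · refine .inl (X1 (hp.mem_of_pow_mem 2 ?_))
    convert ha using 1
    linear_combination algebraMap (ZMod 2)[X] O X * h2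
  · have : algebraMap (ZMod 2)[X] O X * (algebraMap (ZMod 2)[X] O X + 1) ∈ p := by
      convert ha using 1; ring
    exact .inl ((hp.mem_or_mem this).elim X0 X1)
  · right
    simpa [h] using ha

/-- The rational primes `x` and `x + 1` are inert, since `Y² + Y + 1` has no root in `𝔽₂`. -/
lemma eq_span_of_mem_linear (hy : IsGen y) {p : Ideal O} (hp : p.IsPrime) {s : ZMod 2}
    (hs : algebraMap _ O (X - C s) ∈ p) : p = Ideal.span {algebraMap _ O (X - C s)} := by
  have h2 : (2 : O) = 0 := two_eq_zero
  have two : ∀ u : ZMod 2, u = 0 ∨ u = 1 := by decide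
  have red (a : (ZMod 2)[X]) : algebraMap _ O (X - C s) ∣ algebraMap _ O a - algebraMap _ O (C (a.eval s)) := by
    rw [← map_sub]
    exact (algebraMap (ZMod 2)[X] O).map_dvd X_sub_C_dvd_sub_C_eval
  have n1 : (1 : O) ∉ p := fun h1 => hp.ne_top ((Ideal.eq_top_iff_one _).mpr h1)
  have hmem {w : O} (hw : algebraMap _ O (X - C s) ∣ w) : w ∈ p := p.mem_of_dvd hw hs
  have hh : h.eval s = 1 := by
    simp only [h, eval_add, eval_pow, eval_X, eval_one]; clear hs red hmem; revert s; decide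
  have hg : g.eval s = 1 := by
    simp only [g, eval_add, eval_pow, eval_X, eval_one]; clear hs red hmem hh; revert s; decide
  have hq : y ^ 2 + y + 1 ∈ p := by
    have e1 := hmem (red h)
    have e2 := hmem (red (h * g))
    rw [hh, C_1, map_one] at e1
    rw [eval_mul, hh, hg, mul_one, C_1, map_one] at e2
    have := add_mem (p.mul_mem_right y e1) e2
    rw [← neg_mem_iff]
    convert this using 1
    linear_combination -hy.eq
  refine le_antisymm (fun z hz => ?_) (by rwa [Ideal.span_singleton_le_iff_mem])
  rw [Ideal.mem_span_singleton]
  obtain ⟨a, c, rfl⟩ := hy.exists_repr z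
  have ra := red a
  have rc := red c
  have key : algebraMap _ O (C (a.eval s)) + algebraMap _ O (C (c.eval s)) * y ∈ p := by
    have := sub_mem hz (add_mem (hmem ra) (p.mul_mem_right y (hmem rc)))
    convert this using 1
    ring
  rcases two (a.eval s) with ha | ha <;> rcases two (c.eval s) with hc | hc <;>
    simp only [ha, hc, map_zero, map_one, zero_mul, one_mul, zero_add, add_zero, sub_zero]
      at key ra rc
  · exact dvd_add ra (rc.mul_right _)
  · refine absurd ?_ n1
    convert sub_mem hq (p.mul_mem_left (y + 1) key) using 1
    ring
  · exact absurd key n1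
  · refine absurd ?_ n1
    convert sub_mem hq (p.mul_mem_left y key) using 1
    ring

/-- `(h, y)` is the only prime above `h`. -/
lemma eq_span_of_h_mem (hy : IsGen y) {p : Ideal O} (hp : p.IsPrime)
    (hh : algebraMap _ O h ∈ p) : p = Ideal.span {algebraMap _ O h, y} := by
  have n1 : (1 : O) ∉ p := fun h1 => hp.ne_top ((Ideal.eq_top_iff_one _).mpr h1)
  have hyp : y ∈ p := by
    refine hp.mem_of_pow_mem 2 ?_
    have e : y ^ 2 = algebraMap _ O h * (-y - algebraMap _ O g) := by
      have := hy.eq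
      rw [map_mul] at this
      linear_combination this
    rw [e]
    exact p.mul_mem_right _ hh
  refine le_antisymm (fun z hz => ?_) (by
    rw [Ideal.span_le]
    rintro w (rfl | rfl) <;> assumption)
  obtain ⟨a, c, rfl⟩ := hy.exists_repr z
  have hap : algebraMap _ O a ∈ p := by
    simpa using sub_mem hz (p.mul_mem_left (algebraMap _ O c) hyp)
  refine add_mem ?_ (Ideal.mul_mem_left _ _ (Ideal.subset_span (by simp)))
  by_cases hd : h ∣ a
  · exact Ideal.mem_of_dvd _ ((algebraMap (ZMod 2)[X] O).map_dvd hd) (Ideal.subset_span (by simp))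
  · obtain ⟨u, v, huv⟩ := (irreducible_h.coprime_iff_not_dvd).mpr hd
    refine absurd ?_ n1
    rw [← map_one (algebraMap (ZMod 2)[X] O), ← huv, map_add, map_mul, map_mul]
    exact add_mem (p.mul_mem_left _ hh) (p.mul_mem_left _ hap)

lemma span_mul_span (hy : IsGen y) :
    Ideal.span {algebraMap _ O h, y} * Ideal.span {algebraMap _ O h, y} =
      Ideal.span {algebraMap _ O h} := by
  have hyeq := hy.eq
  rw [map_mul] at hyeq
  apply le_antisymm
  · rw [Ideal.mul_le]
    intro r hr t ht
    obtain ⟨r1, r2, rfl⟩ := Ideal.mem_span_pair.mp hr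
    obtain ⟨t1, t2, rfl⟩ := Ideal.mem_span_pair.mp ht
    rw [Ideal.mem_span_singleton]
    refine ⟨r1 * t1 * algebraMap _ O h + r1 * t2 * y + r2 * t1 * y - r2 * t2 * (y + algebraMap _ O g), ?_⟩
    linear_combination r2 * t2 * hyeq
  · rw [Ideal.span_singleton_le_iff_mem]
    have mh : algebraMap _ O h ∈ Ideal.span {algebraMap _ O h, y} := Ideal.subset_span (by simp)
    have my : y ∈ Ideal.span {algebraMap _ O h, y} := Ideal.subset_span (by simp)
    -- Bézout relation showing that `g` is invertible modulo `h`.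
    have bez : X ^ 2 * h + (X + 1) * g = 1 := by
      unfold h g
      linear_combination (X ^ 4 + X ^ 3 + X ^ 2 + X : (ZMod 2)[X]) *
        CharTwo.two_eq_zero (R := (ZMod 2)[X])
    have bez' := congrArg (algebraMap (ZMod 2)[X] O) bez
    simp only [map_add, map_mul, map_one] at bez'
    have := sub_mem (Ideal.mul_mem_left _ (algebraMap (ZMod 2)[X] O (X ^ 2)) (Ideal.mul_mem_mul mh mh))
      (Ideal.mul_mem_left _ (algebraMap (ZMod 2)[X] O X + 1)
        (add_mem (Ideal.mul_mem_mul my my) (Ideal.mul_mem_mul mh my)))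
    convert this using 1
    linear_combination -algebraMap _ O h * bez' + (algebraMap (ZMod 2)[X] O X + 1) * hyeq

/-- The norm of a generator would be associated to `h`, which is neither a square nor of degree at
least five. -/
lemma not_principal (hy : IsGen y) [IsDomain O] :
    ¬ (Ideal.span {algebraMap _ O h, y}).IsPrincipal := by
  rintro ⟨z, hz⟩
  rw [Ideal.submodule_span_eq] at hz
  have e := hy.span_mul_span
  rw [hz, Ideal.span_singleton_mul_span_singleton, Ideal.span_singleton_eq_span_singleton] at e
  obtain ⟨a, c, rfl⟩ := hy.exists_repr z
  have e2 := e.map (Algebra.norm (ZMod 2)[X])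
  have nh : Algebra.norm (ZMod 2)[X] (algebraMap _ O h) = h ^ 2 := by
    have := hy.norm_eq h 0
    simpa [nf] using this
  rw [map_mul, hy.norm_eq, nh, ← pow_two] at e2
  have hd := natDegree_eq_of_degree_eq (degree_eq_degree_of_associated e2)
  rw [natDegree_pow, natDegree_pow, natDegree_h] at hd
  have hc : c = 0 := by
    by_contra hc
    have := five_le_natDegree_nf (a := a) hc
    omega
  subst hc
  have hnf : nf a 0 = a ^ 2 := by simp [nf]
  rw [hnf] at hd e2
  rw [natDegree_pow] at hd
  have hda : h ∣ a := irreducible_h.prime.dvd_of_dvd_pow (irreducible_h.prime.dvd_of_dvd_pow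
    ((dvd_pow_self h two_ne_zero).trans e2.symm.dvd))
  have := natDegree_le_of_dvd hda (by rintro rfl; simp at hd)
  rw [natDegree_h] at this
  omega

end IsGen

/-! ### The class group -/

open nonZeroDivisors

omit [Algebra (ZMod 2)[X] O] in
lemma mk0_mem_of_primes [IsDedekindDomain O] (H : Subgroup (ClassGroup O)) (J : Ideal O)
    (hJ : J ∈ (Ideal O)⁰)
    (hp : ∀ p : Ideal O, ∀ h0 : p ∈ (Ideal O)⁰, p.IsPrime → J ≤ p → ClassGroup.mk0 ⟨p, h0⟩ ∈ H) :
    ClassGroup.mk0 ⟨J, hJ⟩ ∈ H := by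
  induction J using UniqueFactorizationMonoid.induction_on_prime with
  | h₁ => exact absurd rfl (nonZeroDivisors.ne_zero hJ)
  | h₂ J hu =>
    have : (⟨J, hJ⟩ : (Ideal O)⁰) = 1 := Subtype.ext (isUnit_iff_eq_one.mp hu)
    rw [this, map_one]
    exact one_mem _
  | h₃ J p hJ0 hpp ih =>
    have h0 : p ∈ (Ideal O)⁰ := mem_nonZeroDivisors_of_ne_zero hpp.ne_zero
    have hJ' : J ∈ (Ideal O)⁰ := mem_nonZeroDivisors_of_ne_zero hJ0
    have : (⟨p * J, hJ⟩ : (Ideal O)⁰) = ⟨p, h0⟩ * ⟨J, hJ'⟩ := rfl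
    rw [this, map_mul]
    exact mul_mem (hp p h0 (Ideal.isPrime_of_prime hpp) Ideal.mul_le_left)
      (ih hJ' fun q hq0 hq hle => hp q hq0 hq (Ideal.mul_le_right.trans hle))

theorem IsGen.classGroup (hy : IsGen y) [IsDedekindDomain O] :
    IsCyclic (ClassGroup O) ∧ Nat.card (ClassGroup O) = 2 := by
  let _ : Algebra (ZMod 2) O := ((algebraMap (ZMod 2)[X] O).comp C).toAlgebra
  have : IsScalarTower (ZMod 2) (ZMod 2)[X] O := .of_algebraMap_eq fun _ => rfl
  set P : Ideal O := Ideal.span {algebraMap _ O h, y} with hP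
  have hP0 : P ∈ (Ideal O)⁰ := mem_nonZeroDivisors_of_ne_zero fun e => hy.not_principal (by
    rw [← hP, e]; exact bot_isPrincipal)
  set c := ClassGroup.mk0 ⟨P, hP0⟩ with hc
  have c1 : c ≠ 1 := by
    rw [hc, Ne, ClassGroup.mk0_eq_one_iff]
    exact hy.not_principal
  have c2 : c ^ 2 = 1 := by
    rw [hc, ← map_pow, pow_two, Submonoid.mk_mul_mk, ClassGroup.mk0_eq_one_iff, hP, hy.span_mul_span]
    exact ⟨_, rfl⟩
  have hall : ∀ x : ClassGroup O, x ∈ Subgroup.zpowers c := by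
    intro x
    obtain ⟨⟨I, hI⟩, rfl⟩ := ClassGroup.mk0_surjective x
    obtain ⟨J, hJ0, hJ2, z, hz, hIJ⟩ := hy.exists_small (nonZeroDivisors.ne_zero hI)
    have hJ : J ∈ (Ideal O)⁰ := mem_nonZeroDivisors_of_ne_zero hJ0
    have hJH : ClassGroup.mk0 ⟨J, hJ⟩ ∈ Subgroup.zpowers c := by
      obtain ⟨a, ha0, ha2, haJ⟩ := hy.exists_poly_mem hJ0 hJ2
      refine mk0_mem_of_primes _ J hJ fun p hp0 hp hle => ?_
      rcases IsGen.prime_cases hp ha0 ha2 (hle haJ) with ⟨s, hs⟩ | hh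
      · have : ClassGroup.mk0 ⟨p, hp0⟩ = 1 := by
          rw [ClassGroup.mk0_eq_one_iff, hy.eq_span_of_mem_linear hp hs]
          exact ⟨_, rfl⟩
        rw [this]
        exact one_mem _
      · obtain rfl := hy.eq_span_of_h_mem hp hh
        exact Subgroup.mem_zpowers _
    have : ClassGroup.mk0 ⟨I, hI⟩ * ClassGroup.mk0 ⟨J, hJ⟩ = 1 := by
      rw [← map_mul, Submonoid.mk_mul_mk, ClassGroup.mk0_eq_one_iff, hIJ]
      exact ⟨_, rfl⟩
    rw [eq_inv_of_mul_eq_one_left this]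
    exact inv_mem hJH
  refine ⟨⟨c, hall⟩, ?_⟩
  rw [← orderOf_eq_card_of_forall_mem_zpowers hall]
  exact orderOf_eq_prime c2 c1

end Ring

/-! ### The maximal order -/

section Field
variable {f : Polynomial (RatFunc (ZMod 2))}

/-- The ring of integers is Dedekind, by separability of `f`, and is `𝔽₂[x] ⊕ 𝔽₂[x] y`. -/
lemma ringOfIntegers_isGen
    (hf : f = X ^ 2 + C (RatFunc.X ^ 2 + RatFunc.X + 1) * X + C ((RatFunc.X ^ 2 + RatFunc.X + 1) * (RatFunc.X ^ 3 + RatFunc.X + 1)))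
    [Fact (Irreducible f)] :
    IsDedekindDomain (FunctionField.ringOfIntegers (ZMod 2) (AdjoinRoot f)) ∧
    ∃ y : FunctionField.ringOfIntegers (ZMod 2) (AdjoinRoot f), IsGen y := by
  have hirr : Irreducible f := Fact.out
  let F := RatFunc (ZMod 2)
  let K := AdjoinRoot f
  let i : (ZMod 2)[X] →+* F := algebraMap _ _
  have hi : Function.Injective i := IsFractionRing.injective _ _
  have hih : i h = RatFunc.X ^ 2 + RatFunc.X + 1 := by
    simp [i, h, F, RatFunc.algebraMap_X]
  have hig : i g = RatFunc.X ^ 3 + RatFunc.X + 1 := by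
    simp [i, g, F, RatFunc.algebraMap_X]
  have hf' : f = X ^ 2 + C (i h) * X + C (i h * i g) := by rw [hf, hih, hig]
  have hmon : f.Monic := by rw [hf']; monicity!
  have hdeg : f.natDegree = 2 := by rw [hf']; compute_degree!
  let pb := AdjoinRoot.powerBasis' hmon
  have : FunctionField (ZMod 2) K := pb.finite
  have hih0 : i h ≠ 0 := (map_ne_zero_iff i hi).mpr h_ne_zero
  have hsep : Algebra.IsSeparable F K := by
    have hmin : minpoly F (AdjoinRoot.root f) = f := by
      rw [AdjoinRoot.minpoly_root hirr.ne_zero, hmon.leadingCoeff, inv_one, C_1, mul_one]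
    have hs : IsSeparable F (AdjoinRoot.root f) := by
      rw [IsSeparable, hmin, Polynomial.separable_iff_derivative_ne_zero hirr]
      intro e
      have := congrArg (fun q => q.coeff 0) e
      rw [hf'] at this
      simp at this
      exact hih0 this
    have h1 := (IntermediateField.isSeparable_adjoin_simple_iff_isSeparable F K).mpr hs
    rw [IntermediateField.adjoin_root_eq_top f] at h1
    exact AlgEquiv.Algebra.isSeparable (IntermediateField.topEquiv (F := F) (E := K))
  refine ⟨inferInstance, ?_⟩
  let y : K := AdjoinRoot.root f
  let j : F →+* K := algebraMap _ _
  have hjinj : Function.Injective j := j.injective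
  have hj (a : (ZMod 2)[X]) : algebraMap (ZMod 2)[X] K a = j (i a) :=
    IsScalarTower.algebraMap_apply _ F _ _
  have hy : y ^ 2 + j (i h) * y + j (i (h * g)) = 0 := by
    have := AdjoinRoot.eval₂_root f
    conv at this => enter [1, 3]; rw [hf']
    rw [← map_mul] at this
    simp only [eval₂_add, eval₂_mul, eval₂_pow, eval₂_X, eval₂_C] at this
    exact this
  have hyint : IsIntegral (ZMod 2)[X] y := by
    refine ⟨X ^ 2 + C h * X + C (h * g), by monicity!, ?_⟩
    simp only [eval₂_add, eval₂_mul, eval₂_pow, eval₂_X, eval₂_C, hj]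
    exact hy
  have two : (2 : K) = 0 := by
    have := congrArg (algebraMap (ZMod 2)[X] K) (CharTwo.two_eq_zero (R := (ZMod 2)[X]))
    rwa [map_ofNat, map_zero] at this
  -- The nontrivial automorphism of `K` over `𝔽₂(x)`.
  let σ : K →ₐ[F] K := AdjoinRoot.liftAlgHom f (Algebra.ofId F K) (y + j (i h)) (by
    conv => enter [1, 3]; rw [hf', ← map_mul]
    simp only [eval₂_add, eval₂_mul, eval₂_pow, eval₂_X, eval₂_C]
    change (y + j (i h)) ^ 2 + j (i h) * (y + j (i h)) + j (i (h * g)) = 0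
    linear_combination hy + (y * j (i h) + j (i h) ^ 2) * two)
  have hσy : σ y = y + j (i h) := AdjoinRoot.liftAlgHom_root ..
  have hσj (a : F) : σ (j a) = j a := σ.commutes a
  have hrepr (z : K) : ∃ a c : F, z = j a + j c * y := by
    obtain ⟨p, rfl⟩ := AdjoinRoot.mk_surjective z
    have hlt : (p %ₘ f).natDegree < 2 :=
      (natDegree_modByMonic_lt p hmon fun e => by simp [e] at hdeg).trans_eq hdeg
    refine ⟨(p %ₘ f).coeff 0, (p %ₘ f).coeff 1, ?_⟩
    have e := AdjoinRoot.mk_leftInverse hmon (AdjoinRoot.mk f p)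
    rw [AdjoinRoot.modByMonicHom_mk, as_sum_range_C_mul_X_pow' (p %ₘ f) hlt] at e
    simp only [Finset.sum_range_succ, Finset.sum_range_zero, map_add, map_mul, AdjoinRoot.mk_C,
      pow_zero, pow_one, mul_one, zero_add, AdjoinRoot.mk_X] at e
    exact e.symm
  have desc (a : F) (ha : IsIntegral (ZMod 2)[X] (j a)) : ∃ A, i A = a :=
    IsIntegrallyClosed.isIntegral_iff.mp ((isIntegral_algebraMap_iff hjinj).mp ha)
  refine ⟨⟨y, hyint⟩, Subtype.ext ?_, ?_, ?_⟩
  · change y ^ 2 + algebraMap (ZMod 2)[X] K h * y + algebraMap (ZMod 2)[X] K (h * g) = 0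
    rw [hj, hj]
    exact hy
  · rintro ⟨z, hz⟩
    have hz : IsIntegral (ZMod 2)[X] z := hz
    suffices ∃ a c : (ZMod 2)[X], z = j (i a) + j (i c) * y by
      obtain ⟨a, c, e⟩ := this
      exact ⟨a, c, Subtype.ext e⟩
    obtain ⟨a, c, rfl⟩ := hrepr z
    have hz' : IsIntegral (ZMod 2)[X] (σ (j a + j c * y)) :=
      hz.map (σ.restrictScalars (ZMod 2)[X])
    rw [map_add, map_mul, hσj, hσj, hσy] at hz'
    have hii (p : (ZMod 2)[X]) : IsIntegral (ZMod 2)[X] (j (i p)) := by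
      rw [← hj]; exact isIntegral_algebraMap
    obtain ⟨B, hB⟩ := desc (c * i h) (by
      have e : j (c * i h) = (j a + j c * y) + (j a + j c * (y + j (i h))) := by
        rw [map_mul]
        linear_combination -(j a + j c * y) * two
      rw [e]
      exact hz.add hz')
    obtain ⟨n, hn⟩ := desc (a ^ 2 + a * c * i h + c ^ 2 * i h * i g) (by
      have e : j (a ^ 2 + a * c * i h + c ^ 2 * i h * i g) =
          (j a + j c * y) * (j a + j c * (y + j (i h))) := by
        rw [map_mul, map_mul] at hy
        simp only [map_add, map_mul, map_pow]
        linear_combination (-j c ^ 2) * hy + (j c ^ 2 * j (i h) * j (i g) - j a * j c * y) * two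
      rw [e]
      exact hz.mul hz')
    obtain ⟨A, hA⟩ := desc (a * i h) (by
      have e : j (a * i h) = j (i h) * (j a + j c * y) - j (i B) * y := by
        rw [hB, map_mul, map_mul]
        ring
      rw [e]
      exact ((hii h).mul hz).sub ((hii B).mul hyint))
    have key : A ^ 2 + A * B * h + B ^ 2 * h * g = h ^ 2 * n := by
      apply hi
      simp only [map_add, map_mul, map_pow, hA, hB, hn]
      ring
    have hp := irreducible_h.prime
    obtain ⟨A', rfl⟩ : h ∣ A := hp.dvd_of_dvd_pow (n := 2)
      ⟨h * n - A * B - B ^ 2 * g, by linear_combination key⟩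
    have key2 : B ^ 2 * g = h * (n - A' ^ 2 - A' * B) := by
      apply mul_left_cancel₀ h_ne_zero
      linear_combination key
    obtain ⟨B', rfl⟩ : h ∣ B := hp.dvd_of_dvd_pow (n := 2)
      ((hp.dvd_or_dvd ⟨_, key2⟩).resolve_right not_h_dvd_g)
    refine ⟨A', B', ?_⟩
    rw [map_mul, mul_comm] at hA hB
    rw [mul_right_cancel₀ hih0 hA, mul_right_cancel₀ hih0 hB]
  · intro a c e
    have e : j (i a) + j (i c) * y = 0 := congrArg Subtype.val e
    have e2 := congrArg σ e
    rw [map_add, map_mul, hσj, hσj, hσy, map_zero] at e2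
    have e3 : j (i (c * h)) = 0 := by
      rw [map_mul, map_mul]
      linear_combination e2 - e
    have hc : c = 0 := by
      have := hi ((hjinj (e3.trans j.map_zero.symm)).trans i.map_zero.symm)
      exact (mul_eq_zero.mp this).resolve_right h_ne_zero
    subst hc
    refine ⟨?_, rfl⟩
    apply hi
    apply hjinj
    simpa using e

end Field
end HyperellipticF2

theorem class_group_statement_5
    (f : Polynomial (RatFunc (ZMod 2)))
    (hf : f = X ^ 2 + C (RatFunc.X ^ 2 + RatFunc.X + 1) * X + C ((RatFunc.X ^ 2 + RatFunc.X + 1) * (RatFunc.X ^ 3 + RatFunc.X + 1)))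
    [Fact (Irreducible f)] :
    IsCyclic (ClassGroup (FunctionField.ringOfIntegers (ZMod 2) (AdjoinRoot f))) ∧
      Nat.card (ClassGroup (FunctionField.ringOfIntegers (ZMod 2) (AdjoinRoot f))) = 2 := by
  obtain ⟨_, y, hy⟩ := HyperellipticF2.ringOfIntegers_isGen hf
  exact hy.classGroup
end
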